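/- Fix s ∈ ℝ and signs ε₁, ε₂, ε₃, ε₄ ∈ {+1, −1}. Let f₁, f₂, f₃, f₄ : ℝ → ℂ be Schwartz functions and let b : ℝ → ℂ be continuously differentiable with b and b' bounded. For k ∈ ℝ define 𝒯_b(f₁,f₂,f₃,f₄)(k) = ∫_{ℝ⁴} e^{isΦ(k,l,m,n,p)} (⟨l⟩⟨m⟩⟨n⟩⟨p⟩)^{−1} f₁(l) f₂(m) f₃(n) f₄(p) b(q) dl dm dn dp, where Φ(k,l,m,n,p) = ⟨k⟩ − ⟨l⟩ − ⟨m⟩ − ⟨n⟩ − ⟨p⟩ and q = k − ε₁l − ε₂m − ε₃n − ε₄p. Then k ↦ 𝒯_b(f₁,f₂,f₃,f₄)(k) is differentiable and for every k ∈ ℝ: ⟨k⟩ · (d/dk) 𝒯_b(f₁,f₂,f₃,f₄)(k) = i s 𝒯_{b̃}(f₁,f₂,f₃,f₄)(k) + ε₁ 𝒯_b(⟨·⟩f₁', f₂, f₃, f₄)(k) + ε₂ 𝒯_b(f₁, ⟨·⟩f₂', f₃, f₄)(k) + ε₃ 𝒯_b(f₁, f₂, ⟨·⟩f₃', f₄)(k)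 + ε₄ 𝒯_b(f₁, f₂, f₃, ⟨·⟩f₄')(k) + ∫_{ℝ⁴} Φ(k,l,m,n,p) e^{isΦ(k,l,m,n,p)} (⟨l⟩⟨m⟩⟨n⟩⟨p⟩)^{−1} f₁(l) f₂(m) f₃(n) f₄(p) b'(q) dl dm dn dp, where b̃(q) := q·b(q) and ⟨·⟩f_j' denotes the function l ↦ ⟨l⟩ f_j'(l). -/

import Mathlib

open MeasureTheory

/-- Japanese bracket `⟨x⟩ = √(1+x²)`. -/
noncomputable def jb (x : ℝ) : ℝ := Real.sqrt (1 + x ^ 2)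

/-- The phase `Φ(k,l,m,n,p) = ⟨k⟩ − ⟨l⟩ − ⟨m⟩ − ⟨n⟩ − ⟨p⟩`. -/
noncomputable def Phi (k l m n p : ℝ) : ℝ := jb k - jb l - jb m - jb n - jb p

/-- The multilinear form `𝒯_b(f₁,f₂,f₃,f₄)(k)` arising from the singular part of
the quartic nonlinear spectral distribution. -/
noncomputable def Tform (s ε₁ ε₂ ε₃ ε₄ : ℝ) (b f₁ f₂ f₃ f₄ : ℝ → ℂ) (k : ℝ) : ℂ :=
  ∫ l : ℝ, ∫ m : ℝ, ∫ n : ℝ, ∫ p : ℝ,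
    Complex.exp (Complex.I * s * Phi k l m n p) *
      (((jb l * jb m * jb n * jb p : ℝ)⁻¹ : ℝ) : ℂ) *
      f₁ l * f₂ m * f₃ n * f₄ p *
      b (k - ε₁ * l - ε₂ * m - ε₃ * n - ε₄ * p)

/-- Rapidly decaying measurable functions. -/
def Rg (g : ℝ → ℂ) : Prop :=
  Measurable g ∧ ∀ N : ℕ, Integrable (fun l : ℝ => (1 + |l|) ^ N * ‖g l‖)

/-- Measurable functions of polynomial growth. -/
def Ph (h : ℝ → ℂ) : Prop :=
  Measurable h ∧ ∃ (M : ℝ) (N : ℕ), 0 ≤ M ∧ ∀ q, ‖h q‖ ≤ M * (1 + |q|) ^ N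

/-- Twisted convolution. -/
noncomputable def Cv (ε : ℝ) (g h : ℝ → ℂ) (k : ℝ) : ℂ := ∫ l : ℝ, g l * h (k - ε * l)

/-- The one-variable factor of the integrand. -/
noncomputable def gg (s : ℝ) (F : ℝ → ℂ) (l : ℝ) : ℂ :=
  Complex.exp (-(Complex.I * s * jb l)) * ((jb l : ℂ))⁻¹ * F l

lemma jb_pos (x : ℝ) : 0 < jb x := Real.sqrt_pos.mpr (by positivity)

lemma jb_ne (x : ℝ) : (jb x : ℂ) ≠ 0 := by exact_mod_cast (jb_pos x).ne'

lemma one_le_jb (x : ℝ) : 1 ≤ jb x := Real.one_le_sqrt.mpr (by nlinarith [sq_nonneg x])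

lemma jb_le (x : ℝ) : jb x ≤ 1 + |x| := by
  unfold jb
  rw [Real.sqrt_le_left (by positivity)]
  nlinarith [sq_abs x, abs_nonneg x]

lemma jb_meas : Measurable jb := by
  unfold jb; fun_prop

lemma jb_deriv (x : ℝ) : HasDerivAt jb (x / jb x) x := by
  have h : HasDerivAt (fun x : ℝ => 1 + x ^ 2) (2 * x) x := by
    simpa using ((hasDerivAt_pow 2 x).const_add 1)
  have := h.sqrt (by positivity)
  rw [mul_div_mul_left _ _ two_ne_zero] at this
  exact this

lemma exp_norm (s x : ℝ) : ‖Complex.exp (-(Complex.I * s * jb x))‖ = 1 := by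
  have : -(Complex.I * s * jb x) = ((-(s * jb x) : ℝ) : ℂ) * Complex.I := by push_cast; ring
  rw [this, Complex.norm_exp_ofReal_mul_I]

lemma Rg.mul {g u : ℝ → ℂ} (hg : Rg g) (hu : Measurable u)
    (hb : ∀ l, ‖u l‖ ≤ 1 + |l|) : Rg (fun l => u l * g l) := by
  refine ⟨hu.mul hg.1, fun N => ?_⟩
  refine (hg.2 (N + 1)).mono' ?_ ?_
  · have := (hu.mul hg.1)
    refine Measurable.aestronglyMeasurable ?_
    exact Measurable.mul (by fun_prop) this.norm
  · refine Filter.Eventually.of_forall fun l => ?_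
    have h1 : 0 ≤ (1 + |l|) ^ N := by positivity
    rw [Real.norm_of_nonneg (by positivity), norm_mul, pow_succ]
    have := mul_le_mul_of_nonneg_right (hb l) (norm_nonneg (g l))
    nlinarith

lemma Rg_schwartz (f : SchwartzMap ℝ ℂ) : Rg f := by
  refine ⟨f.continuous.measurable, fun N => ?_⟩
  have h0 := f.integrable_pow_mul (volume) 0
  have hN := f.integrable_pow_mul (volume) N
  refine ((h0.add hN).const_mul (2 ^ (N - 1))).mono' ?_ ?_
  · exact Continuous.aestronglyMeasurable (by have := f.continuous; fun_prop)
  · refine Filter.Eventually.of_forall fun l => ?_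
    rw [Real.norm_of_nonneg (by positivity)]
    have := add_pow_le (zero_le_one) (abs_nonneg l) N
    have := mul_le_mul_of_nonneg_right this (norm_nonneg (f l))
    simp only [Pi.add_apply, pow_zero, Real.norm_eq_abs] at *
    refine this.trans (le_of_eq ?_)
    simp; ring

lemma Rg_schwartz' (f : SchwartzMap ℝ ℂ) : Rg (deriv f) := by
  have := Rg_schwartz (SchwartzMap.derivCLM ℂ ℂ f)
  exact this

lemma exp_meas (s : ℝ) : Measurable (fun l : ℝ => Complex.exp (-(Complex.I * s * jb l))) := by
  have := jb_meas
  fun_prop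

lemma Rg_exp {f : ℝ → ℂ} (s : ℝ) (hf : Rg f) :
    Rg (fun l => Complex.exp (-(Complex.I * s * jb l)) * f l) :=
  hf.mul (exp_meas s) fun l => by rw [exp_norm]; linarith [abs_nonneg l]

lemma Rg_gg {f : ℝ → ℂ} (s : ℝ) (hf : Rg f) : Rg (gg s f) := by
  have := jb_meas
  have := exp_meas s
  refine hf.mul (u := fun l => Complex.exp (-(Complex.I * s * jb l)) * ((jb l : ℂ))⁻¹)
    (by fun_prop) fun l => ?_
  rw [norm_mul, exp_norm, one_mul, norm_inv, Complex.norm_real, Real.norm_of_nonneg (jb_pos l).le]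
  have := inv_le_one_of_one_le₀ (one_le_jb l)
  linarith [abs_nonneg l]

lemma Rg_jb {f : ℝ → ℂ} (hf : Rg f) : Rg (fun l => (jb l : ℂ) * f l) := by
  have := jb_meas
  refine hf.mul (u := fun l => (jb l : ℂ)) (by fun_prop) fun l => ?_
  rw [Complex.norm_real, Real.norm_of_nonneg (jb_pos l).le]
  exact jb_le l

lemma Rg_id {f : ℝ → ℂ} (hf : Rg f) : Rg (fun l => (l : ℂ) * f l) := by
  refine hf.mul (u := fun l => (l : ℂ)) (by fun_prop) fun l => ?_
  rw [Complex.norm_real, Real.norm_eq_abs]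
  linarith

lemma Ph.smul {h : ℝ → ℂ} (hh : Ph h) (c : ℂ) : Ph (fun q => c * h q) := by
  obtain ⟨hm, M, N, hM, hb⟩ := hh
  refine ⟨hm.const_mul c, ‖c‖ * M, N, by positivity, fun q => ?_⟩
  rw [norm_mul, mul_assoc]
  exact mul_le_mul_of_nonneg_left (hb q) (norm_nonneg _)

lemma Ph.add {h h' : ℝ → ℂ} (hh : Ph h) (hh' : Ph h') : Ph (fun q => h q + h' q) := by
  obtain ⟨hm, M, N, hM, hb⟩ := hh
  obtain ⟨hm', M', N', hM', hb'⟩ := hh'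
  refine ⟨hm.add hm', M + M', N + N', by positivity, fun q => ?_⟩
  have h1 : (1 : ℝ) ≤ 1 + |q| := by linarith [abs_nonneg q]
  have e1 : (1 + |q|) ^ N ≤ (1 + |q|) ^ (N + N') := pow_le_pow_right₀ h1 (by omega)
  have e2 : (1 + |q|) ^ N' ≤ (1 + |q|) ^ (N + N') := pow_le_pow_right₀ h1 (by omega)
  have := norm_add_le (h q) (h' q)
  have := hb q
  have := hb' q
  have := mul_le_mul_of_nonneg_left e1 hM
  have := mul_le_mul_of_nonneg_left e2 hM'
  linarith

lemma Ph.sub {h h' : ℝ → ℂ} (hh : Ph h) (hh' : Ph h') : Ph (fun q => h q - h' q) := by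
  have := hh.add (hh'.smul (-1))
  simpa [sub_eq_add_neg] using this

lemma Ph.X {h : ℝ → ℂ} (hh : Ph h) : Ph (fun q => (q : ℂ) * h q) := by
  obtain ⟨hm, M, N, hM, hb⟩ := hh
  refine ⟨by fun_prop, M, N + 1, hM, fun q => ?_⟩
  rw [norm_mul, Complex.norm_real, Real.norm_eq_abs, pow_succ]
  calc |q| * ‖h q‖ ≤ (1 + |q|) * (M * (1 + |q|) ^ N) := by
        apply mul_le_mul _ (hb q) (norm_nonneg _) (by positivity)
        linarith
    _ = _ := by ring

lemma bnd {ε : ℝ} (hε : |ε| = 1) {g h : ℝ → ℂ} {M : ℝ} {N : ℕ} (hM : 0 ≤ M)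
    (hb : ∀ q, ‖h q‖ ≤ M * (1 + |q|) ^ N) (R k l : ℝ) (hk : |k| ≤ R) :
    ‖g l * h (k - ε * l)‖ ≤ (M * (1 + R) ^ N) * ((1 + |l|) ^ N * ‖g l‖) := by
  have hR : 0 ≤ R := (abs_nonneg k).trans hk
  have h1 : 1 + |k - ε * l| ≤ (1 + R) * (1 + |l|) := by
    have := abs_sub k (ε * l)
    rw [abs_mul, hε, one_mul] at this
    nlinarith [abs_nonneg l, mul_nonneg hR (abs_nonneg l)]
  have h2 : (1 + |k - ε * l|) ^ N ≤ ((1 + R) * (1 + |l|)) ^ N :=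
    pow_le_pow_left₀ (by positivity) h1 N
  rw [norm_mul]
  calc ‖g l‖ * ‖h (k - ε * l)‖ ≤ ‖g l‖ * (M * ((1 + R) * (1 + |l|)) ^ N) := by
        apply mul_le_mul_of_nonneg_left _ (norm_nonneg _)
        exact (hb _).trans (mul_le_mul_of_nonneg_left h2 hM)
    _ = _ := by rw [mul_pow]; ring

lemma Cv_int {ε : ℝ} (hε : |ε| = 1) {g h : ℝ → ℂ} (hg : Rg g) (hh : Ph h) (k : ℝ) :
    Integrable (fun l : ℝ => g l * h (k - ε * l)) := by
  obtain ⟨hm, M, N, hM, hb⟩ := hh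
  have := hg.1
  refine ((hg.2 N).const_mul (M * (1 + |k|) ^ N)).mono' ?_ ?_
  · exact Measurable.aestronglyMeasurable (by fun_prop)
  · exact Filter.Eventually.of_forall fun l => bnd hε hM hb _ _ _ le_rfl

lemma Ph_Cv {ε : ℝ} (hε : |ε| = 1) {g h : ℝ → ℂ} (hg : Rg g) (hh : Ph h) : Ph (Cv ε g h) := by
  have hi := Cv_int hε hg hh
  obtain ⟨hm, M, N, hM, hb⟩ := hh
  have hgm := hg.1
  refine ⟨?_, M * ∫ l, (1 + |l|) ^ N * ‖g l‖, N, ?_, fun k => ?_⟩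
  · have : Measurable (fun z : ℝ × ℝ => g z.2 * h (z.1 - ε * z.2)) := by fun_prop
    exact (this.stronglyMeasurable.integral_prod_right (ν := volume)).measurable
  · exact mul_nonneg hM (integral_nonneg fun l => by positivity)
  · refine (norm_integral_le_integral_norm _).trans ?_
    calc ∫ l, ‖g l * h (k - ε * l)‖
        ≤ ∫ l, (M * (1 + |k|) ^ N) * ((1 + |l|) ^ N * ‖g l‖) := by
          refine integral_mono (hi k).norm ((hg.2 N).const_mul _) fun l => ?_
          exact bnd hε hM hb _ _ _ le_rfl
      _ = _ := by rw [integral_const_mul]; ring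

lemma Cv_smul (ε : ℝ) (g h : ℝ → ℂ) (c : ℂ) (k : ℝ) :
    Cv ε g (fun q => c * h q) k = c * Cv ε g h k := by
  unfold Cv
  rw [← integral_const_mul]
  congr 1; funext l; ring

lemma Cv_add {ε : ℝ} (hε : |ε| = 1) {g h h' : ℝ → ℂ} (hg : Rg g) (hh : Ph h) (hh' : Ph h')
    (k : ℝ) : Cv ε g (fun q => h q + h' q) k = Cv ε g h k + Cv ε g h' k := by
  unfold Cv
  rw [← integral_add (Cv_int hε hg hh k) (Cv_int hε hg hh' k)]
  congr 1; funext l; ring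

lemma Cv_sub {ε : ℝ} (hε : |ε| = 1) {g h h' : ℝ → ℂ} (hg : Rg g) (hh : Ph h) (hh' : Ph h')
    (k : ℝ) : Cv ε g (fun q => h q - h' q) k = Cv ε g h k - Cv ε g h' k := by
  unfold Cv
  rw [← integral_sub (Cv_int hε hg hh k) (Cv_int hε hg hh' k)]
  congr 1; funext l; ring

lemma Cv_deriv {ε : ℝ} (hε : |ε| = 1) {g h h' : ℝ → ℂ} (hg : Rg g) (hh : Ph h) (hh' : Ph h')
    (hd : ∀ q, HasDerivAt h (h' q) q) (k : ℝ) : HasDerivAt (Cv ε g h) (Cv ε g h' k) k := by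
  have hi := Cv_int hε hg hh
  have hi' := Cv_int hε hg hh'
  obtain ⟨hm', M, N, hM, hb⟩ := hh'
  refine (hasDerivAt_integral_of_dominated_loc_of_deriv_le (s := Metric.ball k 1)
    (bound := fun l => (M * (1 + (|k| + 1)) ^ N) * ((1 + |l|) ^ N * ‖g l‖))
    (F := fun k l => g l * h (k - ε * l)) (F' := fun k l => g l * h' (k - ε * l))
    (Metric.ball_mem_nhds k one_pos) ?_ (hi k) (hi' k).aestronglyMeasurable ?_ ?_ ?_).2
  · exact Filter.Eventually.of_forall fun x => (hi x).aestronglyMeasurable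
  · refine Filter.Eventually.of_forall fun l x hx => bnd hε hM hb _ _ _ ?_
    rw [Metric.mem_ball, Real.dist_eq] at hx
    have := abs_sub_abs_le_abs_sub x k
    linarith
  · exact (hg.2 N).const_mul _
  · refine Filter.Eventually.of_forall fun l x _ => ?_
    have := (hd (x - ε * l)).comp_sub_const x (ε * l)
    exact this.const_mul (g l)

lemma Cv_key {ε s : ℝ} (hε : ε = 1 ∨ ε = -1) (f : SchwartzMap ℝ ℂ) {h h' : ℝ → ℂ}
    (hh : Ph h) (hh' : Ph h') (hd : ∀ q, HasDerivAt h (h' q) q) (k : ℝ) :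
    k * Cv ε (gg s f) h k * (Complex.I * s) =
      Complex.I * s * Cv ε (gg s f) (fun q => q * h q) k
        + ε * Cv ε (gg s (fun l => (jb l : ℂ) * deriv f l)) h k
        - Cv ε (fun l => (jb l : ℂ) * gg s f l) h' k := by
  have ha : |ε| = 1 := by rcases hε with rfl | rfl <;> simp
  have he2 : (ε : ℂ) * ε = 1 := by rcases hε with rfl | rfl <;> simp
  have hf := Rg_schwartz f
  have hf' := Rg_schwartz' f
  have I1 := Cv_int ha (Rg_gg s hf) hh k
  have I2 := Cv_int ha (Rg_gg s hf) hh.X k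
  have I3 := Cv_int ha (Rg_gg s (Rg_jb hf')) hh k
  have I4 := Cv_int ha (Rg_jb (Rg_gg s hf)) hh' k
  have I0 := Cv_int ha (Rg_exp s hf) hh k
  have hder : ∀ l : ℝ, HasDerivAt
      (fun l : ℝ => Complex.exp (-(Complex.I * s * jb l)) * f l * h (k - ε * l))
      ((-(ε : ℂ)) * ((Complex.I * s) * (k * (gg s f l * h (k - ε * l))
        - gg s f l * (((k - ε * l : ℝ) : ℂ) * h (k - ε * l)))
        - ε * (gg s (fun l => (jb l : ℂ) * deriv f l) l * h (k - ε * l))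
        + ((jb l : ℂ) * gg s f l) * h' (k - ε * l))) l := by
    intro l
    have h1 : HasDerivAt (fun l : ℝ => (jb l : ℂ)) ((l / jb l : ℝ) : ℂ) l := (jb_deriv l).ofReal_comp
    have h2 := ((h1.const_mul (Complex.I * s)).neg).cexp
    have h3 : HasDerivAt f (deriv f l) l := f.differentiableAt.hasDerivAt
    have h4 : HasDerivAt (fun l : ℝ => k - ε * l) (-ε) l := by
      simpa using ((hasDerivAt_id l).const_mul ε).const_sub k
    have h5 := (hd (k - ε * l)).scomp l h4
    refine ((h2.mul h3).mul h5).congr_deriv ?_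
    simp only [gg, Complex.real_smul, Function.comp, Pi.mul_apply]
    have hj := jb_ne l
    push_cast
    field_simp
    generalize Complex.exp _ = E
    linear_combination (-(E * f l * h (k - ε * l) * (Complex.I * s * l))
      + E * jb l * deriv f l * h (k - ε * l)) * (-he2)
  have J1 : Integrable (fun l => (k : ℂ) * (gg s f l * h (k - ε * l))
        - gg s f l * (((k - ε * l : ℝ) : ℂ) * h (k - ε * l))) := (I1.const_mul (k : ℂ)).sub I2
  have J2 : Integrable (fun l => (Complex.I * s) * ((k : ℂ) * (gg s f l * h (k - ε * l))
        - gg s f l * (((k - ε * l : ℝ) : ℂ) * h (k - ε * l)))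
        - ε * (gg s (fun l => (jb l : ℂ) * deriv f l) l * h (k - ε * l))) :=
    (J1.const_mul _).sub (I3.const_mul (ε : ℂ))
  have J := J2.add I4
  have hz := integral_eq_zero_of_hasDerivAt_of_integrable hder (J.const_mul (-(ε : ℂ))) I0
  have hne : (-(ε : ℂ)) ≠ 0 := by
    intro h0
    rw [neg_eq_zero] at h0
    simp [h0] at he2
  rw [integral_const_mul, mul_eq_zero, or_iff_right hne] at hz
  rw [integral_add J2 I4, integral_sub (J1.const_mul _) (I3.const_mul (ε : ℂ)),
    integral_const_mul, integral_const_mul,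
    integral_sub (I1.const_mul (k : ℂ)) I2, integral_const_mul] at hz
  unfold Cv
  linear_combination hz

lemma exp_split (s k l m n p : ℝ) :
    Complex.exp (Complex.I * s * Phi k l m n p) =
      Complex.exp (Complex.I * s * jb k) * Complex.exp (-(Complex.I * s * jb l)) *
      Complex.exp (-(Complex.I * s * jb m)) * Complex.exp (-(Complex.I * s * jb n)) *
      Complex.exp (-(Complex.I * s * jb p)) := by
  simp only [← Complex.exp_add]
  congr 1
  unfold Phi
  push_cast
  ring

lemma Tform_eq (s ε₁ ε₂ ε₃ ε₄ : ℝ) (b f₁ f₂ f₃ f₄ : ℝ → ℂ) (k : ℝ) :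
    Tform s ε₁ ε₂ ε₃ ε₄ b f₁ f₂ f₃ f₄ k = Complex.exp (Complex.I * s * jb k) *
      Cv ε₁ (gg s f₁) (Cv ε₂ (gg s f₂) (Cv ε₃ (gg s f₃) (Cv ε₄ (gg s f₄) b))) k := by
  unfold Tform Cv
  simp only [← integral_const_mul]
  congr 1; funext l; congr 1; funext m; congr 1; funext n; congr 1; funext p
  rw [exp_split]
  unfold gg
  push_cast
  rw [mul_inv, mul_inv, mul_inv]
  ring

lemma Phi_int (s ε₁ ε₂ ε₃ ε₄ : ℝ) (h1 : |ε₁| = 1) (h2 : |ε₂| = 1) (h3 : |ε₃| = 1) (h4 : |ε₄| = 1)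
    (b f₁ f₂ f₃ f₄ : ℝ → ℂ) (hf₁ : Rg f₁) (hf₂ : Rg f₂) (hf₃ : Rg f₃) (hf₄ : Rg f₄) (hb : Ph b)
    (k : ℝ) :
    (∫ l : ℝ, ∫ m : ℝ, ∫ n : ℝ, ∫ p : ℝ,
            (Phi k l m n p : ℂ) * Complex.exp (Complex.I * s * Phi k l m n p) *
              (((jb l * jb m * jb n * jb p : ℝ)⁻¹ : ℝ) : ℂ) *
              f₁ l * f₂ m * f₃ n * f₄ p *
              b (k - ε₁ * l - ε₂ * m - ε₃ * n - ε₄ * p)) =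
    Complex.exp (Complex.I * s * jb k) * (
      jb k * Cv ε₁ (gg s f₁) (Cv ε₂ (gg s f₂) (Cv ε₃ (gg s f₃) (Cv ε₄ (gg s f₄) b))) k
      - Cv ε₁ (fun l => jb l * gg s f₁ l)
          (Cv ε₂ (gg s f₂) (Cv ε₃ (gg s f₃) (Cv ε₄ (gg s f₄) b))) k
      - Cv ε₁ (gg s f₁) (Cv ε₂ (fun l => jb l * gg s f₂ l)
          (Cv ε₃ (gg s f₃) (Cv ε₄ (gg s f₄) b))) k
      - Cv ε₁ (gg s f₁) (Cv ε₂ (gg s f₂) (Cv ε₃ (fun l => jb l * gg s f₃ l)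
          (Cv ε₄ (gg s f₄) b))) k
      - Cv ε₁ (gg s f₁) (Cv ε₂ (gg s f₂) (Cv ε₃ (gg s f₃)
          (Cv ε₄ (fun l => jb l * gg s f₄ l) b))) k) := by
  have step : ∀ (ε : ℝ) (_ : |ε| = 1) (g h H : ℝ → ℂ) (_ : Rg g) (_ : Ph h) (_ : Ph H)
      (a : ℂ) (k : ℝ), ∫ l, g l * ((a - jb l) * h (k - ε * l) - H (k - ε * l)) =
        a * Cv ε g h k - (Cv ε (fun l => jb l * g l) h k + Cv ε g H k) := by
    intro ε hε g h H hg hh hH a k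
    have i1 := Cv_int hε hg hh k
    have i2 := Cv_int hε (Rg_jb hg) hh k
    have i3 := Cv_int hε hg hH k
    unfold Cv
    have i4 : Integrable (fun l => (jb l : ℂ) * g l * h (k - ε * l) + g l * H (k - ε * l)) :=
      i2.add i3
    rw [← integral_add i2 i3, ← integral_const_mul, ← integral_sub (i1.const_mul a) i4]
    congr 1; funext l; ring
  have hP0 : Ph (fun _ => (0 : ℂ)) := ⟨measurable_const, 0, 0, le_rfl, by simp⟩
  have g1 := Rg_gg s hf₁
  have g2 := Rg_gg s hf₂
  have g3 := Rg_gg s hf₃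
  have g4 := Rg_gg s hf₄
  have c0 : Cv ε₄ (gg s f₄) (fun _ => 0) = fun _ => 0 := by funext k; simp [Cv]
  have s4 := step ε₄ h4 _ b (fun _ => 0) g4 hb hP0
  simp only [c0, add_zero, sub_zero] at s4
  have pA := Ph_Cv h4 g4 hb
  have pA' := Ph_Cv h4 (Rg_jb g4) hb
  have s3 := step ε₃ h3 _ _ _ g3 pA pA'
  have pB := Ph_Cv h3 g3 pA
  have pB1 := Ph_Cv h3 (Rg_jb g3) pA
  have pB2 := Ph_Cv h3 g3 pA'
  have s2 := step ε₂ h2 _ _ _ g2 pB (pB1.add pB2)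
  have pC := Ph_Cv h2 g2 pB
  have pC1 := Ph_Cv h2 (Rg_jb g2) pB
  have pC2 := Ph_Cv h2 g2 pB1
  have pC3 := Ph_Cv h2 g2 pB2
  have s1 := step ε₁ h1 _ _ _ g1 pC (pC1.add (pC2.add pC3))
  have e2 : ∀ k, Cv ε₂ (gg s f₂) (fun q => Cv ε₃ (fun l => jb l * gg s f₃ l) (Cv ε₄ (gg s f₄) b) q
      + Cv ε₃ (gg s f₃) (Cv ε₄ (fun l => jb l * gg s f₄ l) b) q) k = _ :=
    fun k => Cv_add h2 g2 pB1 pB2 k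
  have e1 := fun k => Cv_add h1 g1 pC1 (pC2.add pC3) k
  have e1' := fun k => Cv_add h1 g1 pC2 pC3 k
  simp only [e2] at s2
  simp only [e1, e1'] at s1
  have key : ∀ l m n p : ℝ, (Phi k l m n p : ℂ) * Complex.exp (Complex.I * s * Phi k l m n p) *
              (((jb l * jb m * jb n * jb p : ℝ)⁻¹ : ℝ) : ℂ) *
              f₁ l * f₂ m * f₃ n * f₄ p *
              b (k - ε₁ * l - ε₂ * m - ε₃ * n - ε₄ * p) =
      Complex.exp (Complex.I * s * jb k) * (gg s f₁ l * (gg s f₂ m * (gg s f₃ n * (gg s f₄ p *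
       ((((jb k - jb l : ℂ) - jb m) - jb n - jb p) *
        b (k - ε₁ * l - ε₂ * m - ε₃ * n - ε₄ * p)))))) := by
    intro l m n p
    rw [exp_split]
    unfold gg Phi
    push_cast
    rw [mul_inv, mul_inv, mul_inv]
    ring
  simp only [key, integral_const_mul, s4, s3, s2, s1]
  ring

/-- Differentiation identity for the multilinear form `𝒯_b`:
`⟨k⟩ ∂_k 𝒯_b(f₁,f₂,f₃,f₄) = is 𝒯_{q·b} + Σ_j ε_j 𝒯_b(…, ⟨·⟩f_j', …) + ∫ Φ e^{isΦ} (…) b'(q)`. -/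
theorem stmt13 (s ε₁ ε₂ ε₃ ε₄ : ℝ)
    (hε₁ : ε₁ = 1 ∨ ε₁ = -1) (hε₂ : ε₂ = 1 ∨ ε₂ = -1)
    (hε₃ : ε₃ = 1 ∨ ε₃ = -1) (hε₄ : ε₄ = 1 ∨ ε₄ = -1)
    (f₁ f₂ f₃ f₄ : SchwartzMap ℝ ℂ)
    (b : ℝ → ℂ) (hb : ContDiff ℝ 1 b)
    (hbB : ∃ M : ℝ, ∀ q : ℝ, ‖b q‖ ≤ M ∧ ‖deriv b q‖ ≤ M) :
    (∀ k : ℝ, DifferentiableAt ℝ (Tform s ε₁ ε₂ ε₃ ε₄ b ⇑f₁ ⇑f₂ ⇑f₃ ⇑f₄) k) ∧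
    ∀ k : ℝ,
      (jb k : ℂ) * deriv (Tform s ε₁ ε₂ ε₃ ε₄ b ⇑f₁ ⇑f₂ ⇑f₃ ⇑f₄) k =
        Complex.I * s *
            Tform s ε₁ ε₂ ε₃ ε₄ (fun q => q * b q) ⇑f₁ ⇑f₂ ⇑f₃ ⇑f₄ k
        + (ε₁ : ℂ) *
            Tform s ε₁ ε₂ ε₃ ε₄ b (fun l => (jb l : ℂ) * deriv (⇑f₁) l) ⇑f₂ ⇑f₃ ⇑f₄ k
        + (ε₂ : ℂ) *
            Tform s ε₁ ε₂ ε₃ ε₄ b ⇑f₁ (fun m => (jb m : ℂ) * deriv (⇑f₂) m) ⇑f₃ ⇑f₄ k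
        + (ε₃ : ℂ) *
            Tform s ε₁ ε₂ ε₃ ε₄ b ⇑f₁ ⇑f₂ (fun n => (jb n : ℂ) * deriv (⇑f₃) n) ⇑f₄ k
        + (ε₄ : ℂ) *
            Tform s ε₁ ε₂ ε₃ ε₄ b ⇑f₁ ⇑f₂ ⇑f₃ (fun p => (jb p : ℂ) * deriv (⇑f₄) p) k
        + ∫ l : ℝ, ∫ m : ℝ, ∫ n : ℝ, ∫ p : ℝ,
            (Phi k l m n p : ℂ) * Complex.exp (Complex.I * s * Phi k l m n p) *
              (((jb l * jb m * jb n * jb p : ℝ)⁻¹ : ℝ) : ℂ) *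
              f₁ l * f₂ m * f₃ n * f₄ p *
              deriv b (k - ε₁ * l - ε₂ * m - ε₃ * n - ε₄ * p) := by
  obtain ⟨M, hM⟩ := hbB
  have a1 : |ε₁| = 1 := by rcases hε₁ with rfl | rfl <;> simp
  have a2 : |ε₂| = 1 := by rcases hε₂ with rfl | rfl <;> simp
  have a3 : |ε₃| = 1 := by rcases hε₃ with rfl | rfl <;> simp
  have a4 : |ε₄| = 1 := by rcases hε₄ with rfl | rfl <;> simp
  have hM0 : 0 ≤ M := (norm_nonneg _).trans (hM 0).1
  have pb : Ph b := ⟨hb.continuous.measurable, M, 0, hM0, fun q => by simpa using (hM q).1⟩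
  have pb' : Ph (deriv b) := ⟨measurable_deriv b, M, 0, hM0, fun q => by simpa using (hM q).2⟩
  have db : ∀ q, HasDerivAt b (deriv b q) q := fun q =>
    (hb.differentiable (by norm_num) q).hasDerivAt
  have r1 := Rg_schwartz f₁
  have r2 := Rg_schwartz f₂
  have r3 := Rg_schwartz f₃
  have r4 := Rg_schwartz f₄
  have g1 := Rg_gg s r1
  have g2 := Rg_gg s r2
  have g3 := Rg_gg s r3
  have g4 := Rg_gg s r4
  have G2 := Rg_gg s (Rg_jb (Rg_schwartz' f₂))
  have G3 := Rg_gg s (Rg_jb (Rg_schwartz' f₃))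
  have G4 := Rg_gg s (Rg_jb (Rg_schwartz' f₄))
  have p4 := Ph_Cv a4 g4 pb
  have p4' := Ph_Cv a4 g4 pb'
  have d4 := Cv_deriv a4 g4 pb pb' db
  have p3 := Ph_Cv a3 g3 p4
  have p3' := Ph_Cv a3 g3 p4'
  have d3 := Cv_deriv a3 g3 p4 p4' d4
  have p2 := Ph_Cv a2 g2 p3
  have p2' := Ph_Cv a2 g2 p3'
  have d2 := Cv_deriv a2 g2 p3 p3' d3
  have d1 := Cv_deriv a1 g1 p2 p2' d2
  have hT : ∀ k, HasDerivAt (Tform s ε₁ ε₂ ε₃ ε₄ b ⇑f₁ ⇑f₂ ⇑f₃ ⇑f₄)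
      (Complex.exp (Complex.I * s * jb k) * (Complex.I * s * ((k / jb k : ℝ) : ℂ)) *
        Cv ε₁ (gg s f₁) (Cv ε₂ (gg s f₂) (Cv ε₃ (gg s f₃) (Cv ε₄ (gg s f₄) b))) k +
       Complex.exp (Complex.I * s * jb k) *
        Cv ε₁ (gg s f₁) (Cv ε₂ (gg s f₂) (Cv ε₃ (gg s f₃) (Cv ε₄ (gg s f₄) (deriv b)))) k) k := by
    intro k
    have h1 : HasDerivAt (fun l : ℝ => (jb l : ℂ)) ((k / jb k : ℝ) : ℂ) k :=
      (jb_deriv k).ofReal_comp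
    have h2 := (h1.const_mul (Complex.I * s)).cexp
    have e : Tform s ε₁ ε₂ ε₃ ε₄ b ⇑f₁ ⇑f₂ ⇑f₃ ⇑f₄ = fun k => _ :=
      funext fun k => Tform_eq s ε₁ ε₂ ε₃ ε₄ b f₁ f₂ f₃ f₄ k
    rw [e]
    exact h2.mul (d1 k)
  refine ⟨fun k => (hT k).differentiableAt, fun k => ?_⟩
  rw [(hT k).deriv, Phi_int s ε₁ ε₂ ε₃ ε₄ a1 a2 a3 a4 _ _ _ _ _ r1 r2 r3 r4 pb' k]
  simp only [Tform_eq]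
  have comm : ∀ {ε : ℝ} (_ : ε = 1 ∨ ε = -1) (f : SchwartzMap ℝ ℂ) {h h' : ℝ → ℂ}
      (_ : Ph h) (_ : Ph h') (_ : ∀ q, HasDerivAt h (h' q) q),
      (fun q : ℝ => Complex.I * s * (q * Cv ε (gg s f) h q)) = fun q =>
        Cv ε (gg s f) (fun q => Complex.I * s * (q * h q)) q
        + ε * Cv ε (gg s (fun l => (jb l : ℂ) * deriv f l)) h q
        - Cv ε (fun l => (jb l : ℂ) * gg s f l) h' q := by
    intro ε hε f h h' hh hh' hd
    funext q
    have := Cv_key (s := s) hε f hh hh' hd q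
    rw [Cv_smul]
    linear_combination this
  have c4 := comm hε₄ f₄ pb pb' db
  have c3 := comm hε₃ f₃ p4 p4' d4
  have c2 := comm hε₂ f₂ p3 p3' d3
  have c1 := congrFun (comm hε₁ f₁ p2 p2' d2) k
  have cc4 : Cv ε₄ (gg s f₄) (fun q : ℝ => Complex.I * s * (q * b q)) =
      fun q => Complex.I * s * Cv ε₄ (gg s f₄) (fun q => q * b q) q :=
    funext fun q => Cv_smul _ _ _ _ _
  simp only [cc4] at c4
  have u4 := (Ph_Cv a4 g4 pb.X).smul (Complex.I * s)
  have v4 := Ph_Cv a4 G4 pb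
  have w4 := Ph_Cv a4 (Rg_jb g4) pb'
  rw [c4] at c3
  simp only [Cv_sub a3 g3 (u4.add (v4.smul ε₄)) w4, Cv_add a3 g3 u4 (v4.smul ε₄), Cv_smul] at c3
  have x1 := Ph_Cv a3 g3 (Ph_Cv a4 g4 pb.X)
  have x2 := Ph_Cv a3 g3 v4
  have x3 := Ph_Cv a3 g3 w4
  have x4 := Ph_Cv a3 G3 p4
  have x5 := Ph_Cv a3 (Rg_jb g3) p4'
  rw [c3] at c2
  simp only [Cv_sub a2 g2 ((((x1.smul (Complex.I * s)).add (x2.smul ε₄)).sub x3).add (x4.smul ε₃)) x5,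
    Cv_add a2 g2 (((x1.smul (Complex.I * s)).add (x2.smul ε₄)).sub x3) (x4.smul ε₃),
    Cv_sub a2 g2 ((x1.smul (Complex.I * s)).add (x2.smul ε₄)) x3,
    Cv_add a2 g2 (x1.smul (Complex.I * s)) (x2.smul ε₄), Cv_smul] at c2
  have y1 := (Ph_Cv a2 g2 x1).smul (Complex.I * s)
  have y2 := (Ph_Cv a2 g2 x2).smul ε₄
  have y3 := Ph_Cv a2 g2 x3
  have y4 := (Ph_Cv a2 g2 x4).smul ε₃
  have y5 := Ph_Cv a2 g2 x5
  have y6 := (Ph_Cv a2 G2 p3).smul ε₂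
  have y7 := Ph_Cv a2 (Rg_jb g2) p3'
  rw [c2] at c1
  simp only [Cv_sub a1 g1 (((((y1.add y2).sub y3).add y4).sub y5).add y6) y7,
    Cv_add a1 g1 ((((y1.add y2).sub y3).add y4).sub y5) y6,
    Cv_sub a1 g1 (((y1.add y2).sub y3).add y4) y5,
    Cv_add a1 g1 ((y1.add y2).sub y3) y4,
    Cv_sub a1 g1 (y1.add y2) y3,
    Cv_add a1 g1 y1 y2, Cv_smul] at c1
  have hj := jb_ne k
  have hjk : (jb k : ℂ) * ((k / jb k : ℝ) : ℂ) = k := by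
    push_cast
    field_simp
  linear_combination Complex.exp (Complex.I * s * jb k) * c1 +
    Complex.exp (Complex.I * s * jb k) * (Complex.I * s) *
      Cv ε₁ (gg s f₁) (Cv ε₂ (gg s f₂) (Cv ε₃ (gg s f₃) (Cv ε₄ (gg s f₄) b))) k * hjk
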